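/- Fix integers N ≥ 2, d ≥ 1, K ≥ 1, let y_1, …, y_K ∈ ℝ^d satisfy the support condition ⋂_{k=1}^{K} {X : f̃_{y_k}(X) = 0} = Ω, and let f_k be the corresponding normalized basis (f_k(X) = f̃_{y_k}(X)/√(∑_i f̃_{y_i}(X)²) off Ω and f_k = 0 on Ω). Then for every anti-symmetric continuous Ψ : (ℝ^d)^N → ℝ and each k ∈ {1, …, K}, the function Φ^k := f_k²·Ψ is continuous, anti-symmetric, vanishes at every X for which y_kᵀX_i = y_kᵀX_j for some i ≠ j, and ∑_{k=1}^{K} Φ^k = Ψ. -/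

import Mathlib

/-!
Put `S = ∑ k, f̃_{y_k}²`, so that `f_k² = f̃_{y_k}² / S` with the convention `0 / 0 = 0`. These
quotients lie in `[0, 1]`, are invariant under permutations, and are continuous with sum `1`
wherever `S ≠ 0`. By the support condition `S` vanishes only on `Ω`, where every anti-symmetric `Ψ`
vanishes as well: swapping two equal particles gives `Ψ X = -Ψ X`. So on `Ω` the sum formula reads
`0 = 0`, and `f_k² Ψ` is continuous there because `|f_k² Ψ| ≤ |Ψ|`.
-/

/-- `f̃_y(X) = ∏_{i<j} yᵀ(X_i − X_j)`. -/
noncomputable def ftilde (N d : ℕ) (y : Fin d → ℝ) (X : Fin N → Fin d → ℝ) : ℝ :=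
  ∏ i : Fin N, ∏ j ∈ Finset.Ioi i, (∑ l : Fin d, y l * (X i l - X j l))

/-- The intrinsic zero set `Ω`. -/
def intrinsicZero (N d : ℕ) : Set (Fin N → Fin d → ℝ) :=
  {X | ∃ i j : Fin N, i ≠ j ∧ X i = X j}

open Classical in
/-- The normalized basis `f_k`. -/
noncomputable def fBasis (N d K : ℕ) (y : Fin K → Fin d → ℝ) (k : Fin K)
    (X : Fin N → Fin d → ℝ) : ℝ :=
  if X ∈ intrinsicZero N d then 0
  else ftilde N d (y k) X / Real.sqrt (∑ i : Fin K, (ftilde N d (y i) X) ^ 2)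

/-- `Ψ` is anti-symmetric. -/
def IsAntisym (N d : ℕ) (Ψ : (Fin N → Fin d → ℝ) → ℝ) : Prop :=
  ∀ (π : Equiv.Perm (Fin N)) (X : Fin N → Fin d → ℝ),
    Ψ (fun i => X (π i)) = ((Equiv.Perm.sign π : ℤ) : ℝ) * Ψ X

section Normalization

variable {ι : Type*} [Fintype ι]

theorem sum_div_sum_smul_eq_self {K E : Type*} [DivisionSemiring K] [AddCommMonoid E] [Module K E]
    {w : ι → K} {v : E} (hv : ∑ i, w i = 0 → v = 0) :
    ∑ k, (w k / ∑ i, w i) • v = v := by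
  rw [← Finset.sum_smul, ← Finset.sum_div]
  rcases eq_or_ne (∑ i, w i) 0 with hw | hw
  · rw [hv hw, smul_zero]
  · rw [div_self hw, one_smul]

theorem norm_div_sum_le_one {w : ι → ℝ} (hw : ∀ i, 0 ≤ w i) (k : ι) :
    ‖w k / ∑ i, w i‖ ≤ 1 := by
  have hsum : 0 ≤ ∑ i, w i := Finset.sum_nonneg fun i _ => hw i
  rw [Real.norm_of_nonneg (div_nonneg (hw k) hsum)]
  exact div_le_one_of_le₀ (Finset.single_le_sum (fun i _ => hw i) (Finset.mem_univ k)) hsum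

theorem continuous_div_sum_smul {α E : Type*} [TopologicalSpace α] [SeminormedAddCommGroup E]
    [NormedSpace ℝ E] {w : ι → α → ℝ} {ψ : α → E} (hw : ∀ i, Continuous (w i))
    (hw_nonneg : ∀ i x, 0 ≤ w i x) (hψ : Continuous ψ)
    (hψ_zero : ∀ x, ∑ i, w i x = 0 → ψ x = 0) (k : ι) :
    Continuous fun x => (w k x / ∑ i, w i x) • ψ x := by
  refine continuous_iff_continuousAt.2 fun x => ?_
  by_cases hx : ∑ i, w i x = 0
  · -- The coefficient may be discontinuous here, but it is bounded and `ψ` tends to `0`.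
    have hbdd : Filter.IsBoundedUnder (· ≤ ·) (nhds x) (norm ∘ fun z => w k z / ∑ i, w i z) :=
      Filter.isBoundedUnder_of ⟨1, fun z => norm_div_sum_le_one (hw_nonneg · z) k⟩
    have hlim : Filter.Tendsto ψ (nhds x) (nhds 0) := hψ_zero x hx ▸ hψ.tendsto x
    simpa only [ContinuousAt, hψ_zero x hx, smul_zero] using hbdd.smul_tendsto_zero hlim
  · have hsum : Continuous fun z => ∑ i, w i z := continuous_finsetSum _ fun i _ => hw i
    exact ((hw k).continuousAt.div hsum.continuousAt hx).smul hψ.continuousAt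

end Normalization

namespace IsAntisym

variable {N d : ℕ} {Φ Ψ : (Fin N → Fin d → ℝ) → ℝ}

theorem eq_zero_of_mem_intrinsicZero (hΨ : IsAntisym N d Ψ) {X : Fin N → Fin d → ℝ}
    (hX : X ∈ intrinsicZero N d) : Ψ X = 0 := by
  obtain ⟨i, j, hij, hXij⟩ := hX
  have hswap : X ∘ Equiv.swap i j = X := by simp [Equiv.comp_swap_eq_update, hXij]
  have hneg : Ψ X = -Ψ X := calc
    Ψ X = Ψ (X ∘ Equiv.swap i j) := by rw [hswap]
    _ = (Equiv.Perm.sign (Equiv.swap i j) : ℤ) * Ψ X := hΨ (Equiv.swap i j) X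
    _ = -Ψ X := by simp [Equiv.Perm.sign_swap hij]
  exact self_eq_neg.1 hneg

theorem sq_comp_perm (hΨ : IsAntisym N d Ψ) (π : Equiv.Perm (Fin N)) (X : Fin N → Fin d → ℝ) :
    Ψ (fun i => X (π i)) ^ 2 = Ψ X ^ 2 := by
  rw [hΨ π X, mul_pow, ← Int.cast_pow, ← Units.val_pow_eq_pow_val, Int.units_sq, Units.val_one,
    Int.cast_one, one_mul]

theorem sq_mul (hΦ : IsAntisym N d Φ) (hΨ : IsAntisym N d Ψ) :
    IsAntisym N d fun X => Φ X ^ 2 * Ψ X := fun π X => by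
  simp only [hΦ.sq_comp_perm, hΨ π X, mul_left_comm]

end IsAntisym

section NormalizedBasis

variable {N d K : ℕ}

theorem isAntisym_ftilde (y : Fin d → ℝ) : IsAntisym N d (ftilde N d y) := fun π X =>
  π.prod_Ioi_comp_eq_sign_mul_prod (f := fun i j => ∑ l, y l * (X i l - X j l)) fun i j => by
    simp only [← Finset.sum_neg_distrib, ← mul_neg, neg_sub]

theorem continuous_ftilde (y : Fin d → ℝ) : Continuous (ftilde N d y) := by
  unfold ftilde
  fun_prop

theorem ftilde_eq_zero_iff {y : Fin d → ℝ} {X : Fin N → Fin d → ℝ} :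
    ftilde N d y X = 0 ↔ ∃ i j, i ≠ j ∧ ∑ l, y l * X i l = ∑ l, y l * X j l := by
  simp only [ftilde, Finset.prod_eq_zero_iff, Finset.mem_univ, Finset.mem_Ioi, true_and, mul_sub,
    Finset.sum_sub_distrib, sub_eq_zero]
  constructor
  · rintro ⟨i, j, hij, hy⟩
    exact ⟨i, j, hij.ne, hy⟩
  · rintro ⟨i, j, hij, hy⟩
    rcases hij.lt_or_gt with hlt | hgt
    · exact ⟨i, j, hlt, hy⟩
    · exact ⟨j, i, hgt, hy.symm⟩

theorem sum_ftilde_sq_eq_zero_iff {ι : Type*} [Fintype ι] {y : ι → Fin d → ℝ}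
    {X : Fin N → Fin d → ℝ} :
    ∑ k, ftilde N d (y k) X ^ 2 = 0 ↔ X ∈ ⋂ k, {X | ftilde N d (y k) X = 0} := by
  simp [Finset.sum_eq_zero_iff_of_nonneg, sq_nonneg]

-- On `Ω` every `f̃_y` vanishes, so the quotient is `0 / 0 = 0` there, the value set by `fBasis`.
theorem fBasis_eq_div (y : Fin K → Fin d → ℝ) (k : Fin K) (X : Fin N → Fin d → ℝ) :
    fBasis N d K y k X = ftilde N d (y k) X / √(∑ i, ftilde N d (y i) X ^ 2) := by
  rw [fBasis]
  split_ifs with hX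
  · rw [(isAntisym_ftilde (y k)).eq_zero_of_mem_intrinsicZero hX, zero_div]
  · rfl

theorem fBasis_sq (y : Fin K → Fin d → ℝ) (k : Fin K) (X : Fin N → Fin d → ℝ) :
    fBasis N d K y k X ^ 2 = ftilde N d (y k) X ^ 2 / ∑ i, ftilde N d (y i) X ^ 2 := by
  rw [fBasis_eq_div, div_pow, Real.sq_sqrt (Finset.sum_nonneg fun i _ => sq_nonneg _)]

theorem isAntisym_fBasis (y : Fin K → Fin d → ℝ) (k : Fin K) :
    IsAntisym N d (fBasis N d K y k) := fun π X => by
  simp only [fBasis_eq_div, (isAntisym_ftilde _).sq_comp_perm, isAntisym_ftilde (y k) π X,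
    mul_div_assoc]

end NormalizedBasis

theorem stmt_13 (N d K : ℕ) (hN : 2 ≤ N) (hd : 1 ≤ d) (hK : 1 ≤ K)
    (y : Fin K → Fin d → ℝ)
    (hsupp : (⋂ k : Fin K, {X : Fin N → Fin d → ℝ | ftilde N d (y k) X = 0})
      = intrinsicZero N d)
    (Ψ : (Fin N → Fin d → ℝ) → ℝ) (hΨcont : Continuous Ψ) (hΨanti : IsAntisym N d Ψ) :
    (∀ k : Fin K, Continuous (fun X => (fBasis N d K y k X) ^ 2 * Ψ X)) ∧
    (∀ k : Fin K, IsAntisym N d (fun X => (fBasis N d K y k X) ^ 2 * Ψ X)) ∧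
    (∀ (k : Fin K) (X : Fin N → Fin d → ℝ),
      (∃ i j : Fin N, i ≠ j ∧ (∑ l : Fin d, y k l * X i l) = ∑ l : Fin d, y k l * X j l) →
      (fBasis N d K y k X) ^ 2 * Ψ X = 0) ∧
    (∀ X : Fin N → Fin d → ℝ,
      ∑ k : Fin K, (fBasis N d K y k X) ^ 2 * Ψ X = Ψ X) := by
  have hzero : ∀ X, ∑ i, ftilde N d (y i) X ^ 2 = 0 → Ψ X = 0 := fun X hX =>
    hΨanti.eq_zero_of_mem_intrinsicZero (hsupp ▸ sum_ftilde_sq_eq_zero_iff.1 hX)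
  refine ⟨fun k => ?continuous, fun k => (isAntisym_fBasis y k).sq_mul hΨanti,
    fun k X hX => ?vanishing, fun X => ?sum⟩
  case continuous =>
    simpa only [fBasis_sq, smul_eq_mul, Pi.pow_apply] using continuous_div_sum_smul
      (fun i => (continuous_ftilde (y i)).pow 2) (fun _ _ => sq_nonneg _) hΨcont hzero k
  case vanishing =>
    rw [fBasis_eq_div, ftilde_eq_zero_iff.2 hX, zero_div, zero_pow two_ne_zero, zero_mul]
  case sum =>
    simpa only [fBasis_sq, smul_eq_mul] using sum_div_sum_smul_eq_self (hzero X)
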